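/- Let q : ℝ^n → ℝ be a polynomial and let k ∈ ℕ with k ≥ 1. Then W^{≥k}[q²] ≤ 4·‖U_{√3}(q^{≥k/2})‖₂²·‖U_{√3} q‖₂², where q^{≥k/2} = Σ_{|α| ≥ k/2} q̂(α)·h_α (the sum over multi-indices α with |α| ≥ k/2). -/

import Mathlib

open MeasureTheory ProbabilityTheory MvPolynomial

/-- The standard Gaussian measure `N(0,1)^n` on `ℝ^n`. -/
noncomputable def gaussianN (n : ℕ) : Measure (Fin n → ℝ) :=
  Measure.pi fun _ => gaussianReal 0 1

/-- The normalized probabilists' Hermite polynomial `h_k = H_k / √(k!)`. -/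
noncomputable def hermiteFn (k : ℕ) (t : ℝ) : ℝ :=
  ((Polynomial.hermite k).map (Int.castRingHom ℝ)).eval t / Real.sqrt (Nat.factorial k)

/-- The multivariate Hermite polynomial `h_α(x) = ∏ i, h_{α i}(x i)`. -/
noncomputable def hermiteMv {n : ℕ} (α : Fin n → ℕ) (x : Fin n → ℝ) : ℝ :=
  ∏ i, hermiteFn (α i) (x i)

/-- Hermite coefficient `f̂(α) = E_{x ∼ N(0,1)^n}[f(x)·h_α(x)]` of a function. -/
noncomputable def hermiteCoeffF {n : ℕ} (f : (Fin n → ℝ) → ℝ) (α : Fin n → ℕ) : ℝ :=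
  ∫ x, f x * hermiteMv α x ∂(gaussianN n)

/-- Hermite coefficient `ĝ(α)` of a polynomial. -/
noncomputable def hermiteCoeff {n : ℕ} (g : MvPolynomial (Fin n) ℝ) (α : Fin n → ℕ) : ℝ :=
  hermiteCoeffF (fun x => eval x g) α

/-- The squared Gaussian 2-norm `‖g‖₂² = E_{x ∼ N(0,1)^n}[g(x)²]`. -/
noncomputable def norm2sq {n : ℕ} (g : MvPolynomial (Fin n) ℝ) : ℝ :=
  ∫ x, (eval x g) ^ 2 ∂(gaussianN n)

/-- The `λ`-zoom of `g` at `x`: `g_{λ|x}(y) = g(√(1-λ)·x + √λ·y)`, as a polynomial in `y`. -/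
noncomputable def zoom {n : ℕ} (g : MvPolynomial (Fin n) ℝ) (lam : ℝ) (x : Fin n → ℝ) :
    MvPolynomial (Fin n) ℝ :=
  aeval (fun i => C (Real.sqrt (1 - lam) * x i) + C (Real.sqrt lam) * X i) g

/-- `HyperVar_R[g^{≥m}] = Σ_{|α| ≥ m} R^{2|α|}·ĝ(α)²`. -/
noncomputable def hyperVarGE {n : ℕ} (R : ℝ) (m : ℕ) (g : MvPolynomial (Fin n) ℝ) : ℝ :=
  ∑' α : Fin n → ℕ, if m ≤ ∑ i, α i then R ^ (2 * ∑ i, α i) * hermiteCoeff g α ^ 2 else 0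

/-- `HyperVar_R[g] = Σ_{α ≠ 0} R^{2|α|}·ĝ(α)²`. -/
noncomputable def hyperVar {n : ℕ} (R : ℝ) (g : MvPolynomial (Fin n) ℝ) : ℝ :=
  hyperVarGE R 1 g

/-- A nice distribution of polynomials of degree at most `d` on `ℝ^n`, indexed by
`υ ∈ ℝ^I`: each `g υ` has degree at most `d` and each coefficient of `g υ` is a
polynomial of degree at most `d` in `υ`. -/
def NiceFamily (n I d : ℕ) (g : (Fin I → ℝ) → MvPolynomial (Fin n) ℝ) : Prop :=
  (∀ υ, (g υ).totalDegree ≤ d) ∧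
  ∀ m : Fin n →₀ ℕ, ∃ P : MvPolynomial (Fin I) ℝ,
    P.totalDegree ≤ d ∧ ∀ υ, coeff m (g υ) = eval υ P

/-- Hermite weight at levels `≥ k`: `W^{≥k}[g] = Σ_{|α| ≥ k} ĝ(α)²`. -/
noncomputable def weightGE {n : ℕ} (k : ℕ) (g : MvPolynomial (Fin n) ℝ) : ℝ :=
  ∑' α : Fin n → ℕ, if k ≤ ∑ i, α i then hermiteCoeff g α ^ 2 else 0

/-- The Gaussian noise operator `U_ρ f = Σ_α ρ^{|α|}·f̂(α)·h_α`, applied to a function. -/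
noncomputable def noiseOpF {n : ℕ} (ρ : ℝ) (f : (Fin n → ℝ) → ℝ) (x : Fin n → ℝ) : ℝ :=
  ∑' α : Fin n → ℕ, ρ ^ (∑ i, α i) * hermiteCoeffF f α * hermiteMv α x

/-- `‖f‖₂² = E_{x ∼ N(0,1)^n}[f(x)²]` for a function on Gaussian space. -/
noncomputable def l2sqF {n : ℕ} (f : (Fin n → ℝ) → ℝ) : ℝ :=
  ∫ x, f x ^ 2 ∂(gaussianN n)

/-- The Hermite part `q^{≥ k/2} = Σ_{|α| ≥ k/2} q̂(α)·h_α` of a polynomial `q`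
(the condition `|α| ≥ k/2` is encoded as `k ≤ 2|α|`). -/
noncomputable def highPartHalf {n : ℕ} (k : ℕ) (q : MvPolynomial (Fin n) ℝ) :
    (Fin n → ℝ) → ℝ :=
  fun x => ∑' α : Fin n → ℕ,
    if k ≤ 2 * ∑ i, α i then hermiteCoeff q α * hermiteMv α x else 0

/-!
The normalized derivative `D_s f = ∂^s f / √s!` sends `h_α` to `√(α choose s) h_{α - s}`, whence
`Σ_s x^{|s|} ‖D_s f‖² = ‖U_{√(1+x)} f‖²` and `E[D_γ f] = f̂(γ)`. Taking expectations in the Leibniz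
rule `D_γ (f g) = Σ_{s + t = γ} √(γ choose s) D_s f · D_t g` and applying Cauchy–Schwarz with the
weights `(γ choose s) x^{-|s|} y^{-|t|}`, which sum to `1` when `1/x + 1/y = 1`, gives
`‖f g‖² ≤ ‖U_{√(1+x)} f‖² ‖U_{√(1+y)} g‖²`.

Split `q = H + L` with `H = q^{≥ k/2}`. Since `L²` has no Hermite coefficient at the levels `≥ k`,
the weight of `q²` there is that of `q² - L² = H (2 • q - H)`, and the product bound applies; the
coefficients of `2 • q - H` are at most twice those of `q`.
-/

open Finset
open Polynomial (hermite derivative)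
open scoped Nat

section MultiIndex

variable {σ : Type*} [Fintype σ]

/-- The multi-index factorial `α! = ∏ i, (α i)!`. -/
def multiFactorial (α : σ →₀ ℕ) : ℕ := ∏ i, (α i)!

/-- The multi-index binomial coefficient `∏ i, (α i).choose (s i)`, which vanishes unless
`s ≤ α`. -/
def multiChoose (α s : σ →₀ ℕ) : ℕ := ∏ i, (α i).choose (s i)

theorem multiFactorial_pos (α : σ →₀ ℕ) : 0 < multiFactorial α :=
  prod_pos fun i _ => (α i).factorial_pos

theorem multiChoose_mul_multiFactorial_mul_multiFactorial (s t : σ →₀ ℕ) :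
    multiChoose (s + t) s * multiFactorial s * multiFactorial t = multiFactorial (s + t) := by
  simp only [multiChoose, multiFactorial, ← prod_mul_distrib]
  refine prod_congr rfl fun i _ => ?_
  rw [Finsupp.add_apply, Nat.choose_symm_add, Nat.add_choose_mul_factorial_mul_factorial]

theorem multiChoose_eq_zero_of_not_le {α s : σ →₀ ℕ} (h : ¬s ≤ α) : multiChoose α s = 0 := by
  obtain ⟨i, hi⟩ : ∃ i, α i < s i := by simpa [Finsupp.le_def] using h
  exact prod_eq_zero (mem_univ i) (Nat.choose_eq_zero_of_lt hi)

theorem multiChoose_pos {α s : σ →₀ ℕ} (h : s ≤ α) : 0 < multiChoose α s :=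
  prod_pos fun i _ => Nat.choose_pos (h i)

variable [DecidableEq σ]

theorem sum_antidiagonal_prod {R : Type*} [CommSemiring R] (f : σ → ℕ × ℕ → R) (α : σ →₀ ℕ) :
    ∑ p ∈ antidiagonal α, ∏ i, f i (p.1 i, p.2 i) = ∏ i, ∑ q ∈ antidiagonal (α i), f i q := by
  rw [prod_univ_sum]
  refine sum_nbij' (fun p i => (p.1 i, p.2 i))
    (fun q => (Finsupp.equivFunOnFinite.symm fun i => (q i).1,
      Finsupp.equivFunOnFinite.symm fun i => (q i).2)) ?_ ?_ ?_ ?_ ?_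
  · simp +contextual [Fintype.mem_piFinset, Finsupp.ext_iff]
  · simp +contextual [Fintype.mem_piFinset, Finsupp.ext_iff]
  · intro p _; ext <;> simp
  · intro q _; ext <;> simp
  · simp

theorem sum_antidiagonal_multiChoose_mul_pow {R : Type*} [CommSemiring R] (x y : R)
    (α : σ →₀ ℕ) :
    ∑ p ∈ antidiagonal α, (multiChoose α p.1 : R) * (x ^ p.1.degree * y ^ p.2.degree) =
      (x + y) ^ α.degree := by
  calc ∑ p ∈ antidiagonal α, (multiChoose α p.1 : R) * (x ^ p.1.degree * y ^ p.2.degree)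
      = ∑ p ∈ antidiagonal α, ∏ i, ((α i).choose (p.1 i) * (x ^ p.1 i * y ^ p.2 i)) := by
        simp only [multiChoose, Finsupp.degree_eq_sum, Nat.cast_prod, prod_mul_distrib,
          prod_pow_eq_pow_sum]
    _ = ∏ i, ∑ q ∈ antidiagonal (α i), ((α i).choose q.1 * (x ^ q.1 * y ^ q.2)) :=
        sum_antidiagonal_prod (fun i q => ((α i).choose q.1 * (x ^ q.1 * y ^ q.2) : R)) α
    _ = (x + y) ^ α.degree := by
        rw [Finsupp.degree_eq_sum, ← prod_pow_eq_pow_sum]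
        simp only [(Commute.all x y).add_pow', nsmul_eq_mul]

end MultiIndex

section Taylor

variable {σ : Type*}

/-- The Taylor expansion `f(x + Y)` as a polynomial in the increment `Y` whose coefficients are
polynomials in `x`. -/
noncomputable def mvTaylor (σ R : Type*) [CommSemiring R] :
    MvPolynomial σ R →ₐ[R] MvPolynomial σ (MvPolynomial σ R) :=
  aeval fun i => X i + C (X i)

variable [Fintype σ]

/-- The normalized derivative `∂^s f / √s!`, read off as `√s!` times the Taylor coefficient
`∂^s f / s!`. It lowers `h_α` to a multiple of `h_{α - s}`. -/
noncomputable def normalizedDeriv (s : σ →₀ ℕ) : MvPolynomial σ ℝ →ₗ[ℝ] MvPolynomial σ ℝ :=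
  √(multiFactorial s) •
    (lcoeff (MvPolynomial σ ℝ) s).restrictScalars ℝ ∘ₗ (mvTaylor σ ℝ).toLinearMap

theorem normalizedDeriv_apply (s : σ →₀ ℕ) (f : MvPolynomial σ ℝ) :
    normalizedDeriv s f = √(multiFactorial s) • coeff s (mvTaylor σ ℝ f) := rfl

theorem normalizedDeriv_mul [DecidableEq σ] (γ : σ →₀ ℕ) (f g : MvPolynomial σ ℝ) :
    normalizedDeriv γ (f * g) = ∑ p ∈ antidiagonal γ,
      √(multiChoose γ p.1) • (normalizedDeriv p.1 f * normalizedDeriv p.2 g) := by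
  rw [normalizedDeriv_apply, map_mul, coeff_mul, smul_sum]
  refine sum_congr rfl fun p hp => ?_
  obtain rfl := mem_antidiagonal.1 hp
  simp only [normalizedDeriv_apply, smul_mul_smul_comm, smul_smul,
    ← multiChoose_mul_multiFactorial_mul_multiFactorial, Nat.cast_mul, Nat.cast_nonneg,
    Real.sqrt_mul, mul_assoc]

end Taylor

section HermiteDerivatives

open Polynomial in
theorem derivative_hermite (k : ℕ) :
    derivative (hermite k) = (k : ℤ[X]) * hermite (k - 1) := by
  induction k with
  | zero => simp
  | succ k ih =>
    cases k with
    | zero => simp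
    | succ k =>
      rw [hermite_succ (k + 1), derivative_sub, derivative_mul, ih, derivative_natCast_mul,
        derivative_X]
      simp only [Nat.add_sub_cancel]
      rw [hermite_succ k]
      push_cast
      ring

open Polynomial in
theorem iterate_derivative_hermite (k m : ℕ) :
    derivative^[m] (hermite k) = k.descFactorial m • hermite (k - m) := by
  induction m with
  | zero => simp
  | succ m ih =>
    rw [Function.iterate_succ_apply', ih, derivative_smul, derivative_hermite,
      Nat.descFactorial_succ, Nat.sub_sub, ← nsmul_eq_mul, smul_smul, mul_comm]

open Polynomial in
theorem hasseDeriv_hermite (k m : ℕ) :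
    hasseDeriv m (hermite k) = k.choose m • hermite (k - m) := by
  apply nsmul_right_injective m.factorial_ne_zero
  dsimp only
  rw [← LinearMap.smul_apply, factorial_smul_hasseDeriv, iterate_derivative_hermite, smul_smul,
    Nat.descFactorial_eq_factorial_mul_choose]

theorem hasseDeriv_map {R S : Type*} [Semiring R] [Semiring S] (f : R →+* S) (m : ℕ)
    (p : Polynomial R) :
    Polynomial.hasseDeriv m (p.map f) = (Polynomial.hasseDeriv m p).map f := by
  ext i
  simp only [Polynomial.hasseDeriv_coeff, Polynomial.coeff_map, map_mul, map_natCast]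

theorem aeval_hermite_add {A : Type*} [CommRing A] [Algebra ℤ A] (k : ℕ) (x y : A) :
    Polynomial.aeval (x + y) (hermite k) = ∑ p ∈ antidiagonal k,
      k.choose p.1 • (x ^ p.1 * Polynomial.aeval y (hermite p.2)) := by
  have coeff_taylor (m : ℕ) :
      (((hermite k).map (algebraMap ℤ A)).taylor y).coeff m =
        k.choose m • Polynomial.aeval y (hermite (k - m)) := by
    rw [Polynomial.taylor_coeff, hasseDeriv_map, Polynomial.eval_map_algebraMap,
      hasseDeriv_hermite, map_nsmul]
  rw [Nat.sum_antidiagonal_eq_sum_range_succ_mk, Polynomial.aeval_def, ← Polynomial.eval_map,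
    ← Polynomial.taylor_eval, Polynomial.eval_eq_sum_range' (n := k + 1)]
  · exact sum_congr rfl fun m _ => by rw [coeff_taylor, smul_mul_assoc, mul_comm]
  · rw [Polynomial.natDegree_taylor, Nat.lt_succ_iff]
    exact Polynomial.natDegree_map_le.trans_eq Polynomial.natDegree_hermite

end HermiteDerivatives

section MvHermite

theorem map_aeval_int {A B : Type*} [CommRing A] [CommRing B] [Algebra ℤ A] [Algebra ℤ B]
    (f : A →+* B) (a : A) (p : Polynomial ℤ) :
    f (Polynomial.aeval a p) = Polynomial.aeval (f a) p := by
  rw [Polynomial.aeval_def, Polynomial.hom_eval₂, RingHom.ext_int (f.comp _) (algebraMap ℤ B),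
    Polynomial.aeval_def]

variable {σ : Type*} [Fintype σ]

/-- The normalized multivariate Hermite polynomial `h_α`, as a polynomial. -/
noncomputable def mvHermite (α : σ →₀ ℕ) : MvPolynomial σ ℝ :=
  (√(multiFactorial α))⁻¹ • ∏ i, Polynomial.aeval (X i) (hermite (α i))

theorem eval_mvHermite {n : ℕ} (α : Fin n →₀ ℕ) (x : Fin n → ℝ) :
    eval x (mvHermite α) = hermiteMv α x := by
  have eval_factor (i : Fin n) :
      eval x (Polynomial.aeval (X i) (hermite (α i))) =
        ((hermite (α i)).map (Int.castRingHom ℝ)).eval (x i) := by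
    rw [map_aeval_int, eval_X, Polynomial.aeval_def, ← Polynomial.eval_map, algebraMap_int_eq]
  simp only [mvHermite, hermiteMv, hermiteFn, smul_eval, eval_prod, eval_factor,
    multiFactorial, Nat.cast_prod, Real.sqrt_prod _ fun _ _ => Nat.cast_nonneg _,
    div_eq_inv_mul, prod_mul_distrib, prod_inv_distrib]

theorem coeff_mvTaylor_prod_aeval_hermite (s α : σ →₀ ℕ) :
    coeff s (mvTaylor σ ℝ (∏ i, Polynomial.aeval (X i) (hermite (α i)))) =
      multiChoose α s • ∏ i, Polynomial.aeval (X i) (hermite ((α - s) i)) := by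
  classical
  have taylor_factor (i : σ) :
      mvTaylor σ ℝ (Polynomial.aeval (X i) (hermite (α i))) =
        ∑ q ∈ antidiagonal (α i), (α i).choose q.1 •
          (X i ^ q.1 * C (Polynomial.aeval (X i) (hermite q.2))) := by
    simp only [map_aeval_int C]
    rw [← aeval_hermite_add, ← aeval_X (R := ℝ) (fun i => X i + C (X i)) i]
    exact map_aeval_int (mvTaylor σ ℝ).toRingHom _ _
  rw [map_prod, prod_congr rfl fun i _ => taylor_factor i, ← sum_antidiagonal_prod
    (fun i q => (α i).choose q.1 • (X i ^ q.1 *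
      C (Polynomial.aeval (X i) (hermite q.2)) : MvPolynomial σ (MvPolynomial σ ℝ)))]
  have prod_eq_monomial (p : (σ →₀ ℕ) × (σ →₀ ℕ)) :
      ∏ i, (α i).choose (p.1 i) • ((X i : MvPolynomial σ (MvPolynomial σ ℝ)) ^ p.1 i *
        C (Polynomial.aeval (X i) (hermite (p.2 i)))) =
      monomial p.1 (multiChoose α p.1 •
        ∏ i, Polynomial.aeval (X i) (hermite (p.2 i))) := by
    rw [monomial_eq, Finsupp.prod_fintype _ _ fun _ => pow_zero _]
    simp only [nsmul_eq_mul, prod_mul_distrib, map_mul, map_natCast, map_prod, multiChoose,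
      Nat.cast_prod]
    ring
  simp only [prod_eq_monomial, coeff_sum, coeff_monomial]
  rw [← sum_filter, HasAntidiagonal.filter_fst_eq_antidiagonal α s]
  split_ifs with h
  · rw [sum_singleton]
  · simp [multiChoose_eq_zero_of_not_le h]

theorem normalizedDeriv_mvHermite (s α : σ →₀ ℕ) :
    normalizedDeriv s (mvHermite α) = √(multiChoose α s) • mvHermite (α - s) := by
  rw [normalizedDeriv_apply, mvHermite, map_smul, coeff_smul, coeff_mvTaylor_prod_aeval_hermite]
  by_cases h : s ≤ α
  · have choose_mul := multiChoose_mul_multiFactorial_mul_multiFactorial s (α - s)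
    rw [add_tsub_cancel_of_le h] at choose_mul
    have sqrt_mul := congrArg (fun m : ℕ => √(m : ℝ)) choose_mul
    simp only [Nat.cast_mul, Nat.cast_nonneg, Real.sqrt_mul, mul_nonneg] at sqrt_mul
    have sqrt_pos (m : ℕ) (hm : 0 < m) : √(m : ℝ) ≠ 0 := (Real.sqrt_pos.2 (Nat.cast_pos.2 hm)).ne'
    have := sqrt_pos _ (multiChoose_pos h)
    have := sqrt_pos _ (multiFactorial_pos s)
    have := sqrt_pos _ (multiFactorial_pos (α - s))
    rw [mvHermite, ← Nat.cast_smul_eq_nsmul ℝ, smul_smul, smul_smul, smul_smul, ← sqrt_mul]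
    congr 1
    field_simp
    exact (Real.sq_sqrt (Nat.cast_nonneg _)).symm
  · simp [multiChoose_eq_zero_of_not_le h]

end MvHermite

section Gaussian

open scoped NNReal Polynomial

theorem integrable_eval_gaussianReal (m : ℝ) (v : ℝ≥0) (p : ℝ[X]) :
    Integrable (fun x => p.eval x) (gaussianReal m v) := by
  induction p using Polynomial.induction_on' with
  | add p q hp hq => simpa only [Polynomial.eval_add] using hp.fun_add hq
  | monomial k a =>
    simp only [Polynomial.eval_monomial]
    refine Integrable.const_mul ?_ a
    have integrable_norm_pow := (memLp_id_gaussianReal (μ := m) (v := v) k).integrable_norm_pow'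
    exact integrable_norm_pow.mono' (by fun_prop) (ae_of_all _ fun x => by simp)

theorem hasDerivAt_gaussianPDFReal (m : ℝ) (v : ℝ≥0) (x : ℝ) :
    HasDerivAt (gaussianPDFReal m v) (gaussianPDFReal m v x * (-(x - m) / v)) x := by
  rw [gaussianPDFReal_def]
  have hasDerivAt_exponent :
      HasDerivAt (fun x : ℝ => -(x - m) ^ 2 / (2 * v)) (-(x - m) / v) x := by
    refine ((((hasDerivAt_id x).sub_const m).pow 2).neg.div_const (2 * (v : ℝ))).congr_deriv ?_
    simp only [id_eq, Nat.cast_ofNat, mul_one]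
    field_simp
    norm_num
  refine (hasDerivAt_exponent.exp.const_mul (√(2 * Real.pi * v))⁻¹).congr_deriv ?_
  ring

theorem integral_sub_mul_eval_gaussianReal (m : ℝ) (v : ℝ≥0) (p : ℝ[X]) :
    ∫ x, (x - m) * p.eval x ∂(gaussianReal m v) =
      v * ∫ x, p.derivative.eval x ∂(gaussianReal m v) := by
  rcases eq_or_ne v 0 with rfl | hv
  · simp
  have integrable_pdf_mul (r : ℝ[X]) : Integrable fun x => gaussianPDFReal m v x * r.eval x := by
    have := integrable_eval_gaussianReal m v r
    rw [gaussianReal_of_var_ne_zero m hv, integrable_withDensity_iff_integrable_smul'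
      (measurable_gaussianPDF m v) (ae_of_all _ fun x => gaussianPDF_lt_top)] at this
    simpa [toReal_gaussianPDF] using this
  have hasDerivAt_pdf_mul (x : ℝ) : HasDerivAt (fun x => gaussianPDFReal m v x * p.eval x)
      (gaussianPDFReal m v x * (derivative p -
        Polynomial.C (v : ℝ)⁻¹ * ((Polynomial.X - Polynomial.C m) * p)).eval x) x := by
    refine ((hasDerivAt_gaussianPDFReal m v x).mul (p.hasDerivAt x)).congr_deriv ?_
    simp only [Polynomial.eval_sub, Polynomial.eval_mul, Polynomial.eval_X, Polynomial.eval_C]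
    ring
  have integral_eq_zero := integral_eq_zero_of_hasDerivAt_of_integrable hasDerivAt_pdf_mul
    (integrable_pdf_mul _) (integrable_pdf_mul p)
  have integral_sub_eq_zero :
      ∫ x, (p.derivative.eval x - (v : ℝ)⁻¹ * ((x - m) * p.eval x)) ∂(gaussianReal m v) = 0 := by
    simpa [integral_gaussianReal_eq_integral_smul hv] using integral_eq_zero
  have integrable_sub_mul :
      Integrable (fun x => (v : ℝ)⁻¹ * ((x - m) * p.eval x)) (gaussianReal m v) := by
    have := integrable_eval_gaussianReal m v
      (Polynomial.C (v : ℝ)⁻¹ * ((Polynomial.X - Polynomial.C m) * p))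
    simpa only [Polynomial.eval_mul, Polynomial.eval_sub, Polynomial.eval_X, Polynomial.eval_C]
      using this
  rw [integral_sub (integrable_eval_gaussianReal m v _) integrable_sub_mul, integral_const_mul,
    sub_eq_zero] at integral_sub_eq_zero
  rw [integral_sub_eq_zero, mul_inv_cancel_left₀ (by exact_mod_cast hv)]

theorem integral_hermite_mul_gaussianReal (k : ℕ) (p : ℝ[X]) :
    ∫ x, Polynomial.aeval x (hermite k) * p.eval x ∂(gaussianReal 0 1) =
      ∫ x, (derivative^[k] p).eval x ∂(gaussianReal 0 1) := by
  induction k generalizing p with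
  | zero => simp
  | succ k ih =>
    set H : ℝ[X] := (hermite k).map (algebraMap ℤ ℝ) with hH
    have integrable_X_mul : Integrable (fun x => x * (H * p).eval x) (gaussianReal 0 1) := by
      have := integrable_eval_gaussianReal 0 1 (Polynomial.X * (H * p))
      simpa only [Polynomial.eval_mul, Polynomial.eval_X] using this
    have by_parts : ∫ x, x * (H * p).eval x ∂(gaussianReal 0 1) =
        ∫ x, (derivative (H * p)).eval x ∂(gaussianReal 0 1) := by
      simpa only [sub_zero, NNReal.coe_one, one_mul] using
        integral_sub_mul_eval_gaussianReal 0 1 (H * p)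
    calc ∫ x, Polynomial.aeval x (hermite (k + 1)) * p.eval x ∂(gaussianReal 0 1)
        = ∫ x, (x * (H * p).eval x - (derivative H * p).eval x) ∂(gaussianReal 0 1) := by
          congr with x
          simp only [hH, Polynomial.hermite_succ, map_sub, map_mul, Polynomial.aeval_X,
            Polynomial.eval_mul, Polynomial.derivative_map, Polynomial.eval_map_algebraMap]
          ring
      _ = ∫ x, ((derivative (H * p)).eval x - (derivative H * p).eval x)
            ∂(gaussianReal 0 1) := by
          rw [integral_sub integrable_X_mul (integrable_eval_gaussianReal 0 1 _), by_parts,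
            ← integral_sub (integrable_eval_gaussianReal 0 1 _)
              (integrable_eval_gaussianReal 0 1 _)]
      _ = ∫ x, Polynomial.aeval x (hermite k) * (derivative p).eval x
            ∂(gaussianReal 0 1) := by
          simp only [Polynomial.derivative_mul, Polynomial.eval_add, add_sub_cancel_left,
            Polynomial.eval_mul, hH, Polynomial.eval_map_algebraMap]
      _ = ∫ x, (derivative^[k + 1] p).eval x ∂(gaussianReal 0 1) := ih _

theorem integral_hermite_gaussianReal (k : ℕ) :
    ∫ x, Polynomial.aeval x (hermite k) ∂(gaussianReal 0 1) = if k = 0 then 1 else 0 := by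
  have := integral_hermite_mul_gaussianReal k 1
  cases k <;> simp_all

theorem integral_hermite_mul_hermite_gaussianReal (j k : ℕ) :
    ∫ x : ℝ, Polynomial.aeval x (hermite j) * Polynomial.aeval x (hermite k) ∂(gaussianReal 0 1) =
      if j = k then (k ! : ℝ) else 0 := by
  simp only [← Polynomial.eval_map_algebraMap (hermite k)]
  rw [integral_hermite_mul_gaussianReal, Polynomial.iterate_derivative_map,
    iterate_derivative_hermite]
  simp only [nsmul_eq_mul, Polynomial.eval_map_algebraMap, map_mul, map_natCast,
    integral_const_mul, integral_hermite_gaussianReal]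
  rcases lt_trichotomy j k with h | rfl | h
  · simp [h.ne, (Nat.sub_pos_of_lt h).ne']
  · simp [Nat.descFactorial_self]
  · simp [h.ne', Nat.descFactorial_of_lt h]

theorem integral_hermiteFn_mul_hermiteFn (j k : ℕ) :
    ∫ x, hermiteFn j x * hermiteFn k x ∂(gaussianReal 0 1) = if j = k then 1 else 0 := by
  have hermiteFn_mul (x : ℝ) : hermiteFn j x * hermiteFn k x = (√(j ! : ℝ) * √(k ! : ℝ))⁻¹ *
      (Polynomial.aeval x (hermite j) * Polynomial.aeval x (hermite k)) := by
    simp only [hermiteFn, ← Polynomial.eval_map_algebraMap, algebraMap_int_eq]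
    field_simp
  simp only [hermiteFn_mul, integral_const_mul, integral_hermite_mul_hermite_gaussianReal]
  split_ifs with h
  · rw [h, Real.mul_self_sqrt (Nat.cast_nonneg _), inv_mul_cancel₀ (by positivity)]
  · rw [mul_zero]

theorem integrable_eval_pi {ι : Type*} [Fintype ι] {μ : ι → Measure ℝ} [∀ i, SigmaFinite (μ i)]
    (hμ : ∀ i (k : ℕ), Integrable (fun x => x ^ k) (μ i)) (f : MvPolynomial ι ℝ) :
    Integrable (fun x => eval x f) (Measure.pi μ) := by
  induction f using MvPolynomial.induction_on' with
  | add p q hp hq => simpa only [map_add] using hp.fun_add hq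
  | monomial s a =>
    simp only [eval_monomial, Finsupp.prod_fintype _ _ fun _ => pow_zero _]
    exact (Integrable.fintype_prod fun i => hμ i (s i)).const_mul a

theorem integrable_eval_gaussianN {n : ℕ} (f : MvPolynomial (Fin n) ℝ) :
    Integrable (fun x => eval x f) (gaussianN n) :=
  integrable_eval_pi (fun _ k => by
    simpa using integrable_eval_gaussianReal 0 1 (Polynomial.X ^ k)) f

theorem integral_hermiteMv_mul_hermiteMv {n : ℕ} (α β : Fin n → ℕ) :
    ∫ x, hermiteMv α x * hermiteMv β x ∂(gaussianN n) = if α = β then 1 else 0 := by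
  simp only [hermiteMv, ← prod_mul_distrib, gaussianN]
  rw [integral_fintype_prod_eq_prod (f := fun i t => hermiteFn (α i) t * hermiteFn (β i) t)]
  simp only [integral_hermiteFn_mul_hermiteFn, Fintype.prod_ite_zero, prod_const_one, funext_iff]

end Gaussian

section GaussianInner

variable {n : ℕ}

/-- The expectation `E[f(x)]` of a polynomial under the standard Gaussian measure, as a linear
form. -/
noncomputable def gaussianExp (n : ℕ) : MvPolynomial (Fin n) ℝ →ₗ[ℝ] ℝ where
  toFun f := ∫ x, eval x f ∂(gaussianN n)
  map_add' f g := by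
    simpa only [map_add] using
      integral_add (integrable_eval_gaussianN f) (integrable_eval_gaussianN g)
  map_smul' c f := by simp only [smul_eval, integral_const_mul, RingHom.id_apply, smul_eq_mul]

/-- The inner product `⟨f, g⟩ = E[f(x) g(x)]` of `L²(γ_n)`, restricted to polynomials. -/
noncomputable def gaussianInner (n : ℕ) : LinearMap.BilinForm ℝ (MvPolynomial (Fin n) ℝ) :=
  (LinearMap.mul ℝ _).compr₂ (gaussianExp n)

theorem gaussianInner_apply (f g : MvPolynomial (Fin n) ℝ) :
    gaussianInner n f g = gaussianExp n (f * g) := rfl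

theorem gaussianInner_eq_integral (f g : MvPolynomial (Fin n) ℝ) :
    gaussianInner n f g = ∫ x, eval x f * eval x g ∂(gaussianN n) := by
  simp only [gaussianInner_apply, gaussianExp, LinearMap.coe_mk, AddHom.coe_mk, eval_mul]

theorem gaussianInner_self (f : MvPolynomial (Fin n) ℝ) : gaussianInner n f f = norm2sq f := by
  simp only [gaussianInner_eq_integral, norm2sq, sq]

theorem norm2sq_nonneg (f : MvPolynomial (Fin n) ℝ) : 0 ≤ norm2sq f :=
  integral_nonneg fun _ => sq_nonneg _

theorem gaussianInner_sq_le (f g : MvPolynomial (Fin n) ℝ) :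
    gaussianInner n f g ^ 2 ≤ norm2sq f * norm2sq g := by
  simpa only [gaussianInner_self] using LinearMap.BilinForm.apply_sq_le_of_symm (gaussianInner n)
    (fun f => by rw [gaussianInner_self]; exact norm2sq_nonneg f)
    ⟨fun f g => by simp only [gaussianInner_apply, mul_comm, RingHom.id_apply]⟩ f g

theorem gaussianInner_mvHermite (α β : Fin n →₀ ℕ) :
    gaussianInner n (mvHermite α) (mvHermite β) = if α = β then 1 else 0 := by
  simp only [gaussianInner_eq_integral, eval_mvHermite, integral_hermiteMv_mul_hermiteMv,
    DFunLike.coe_fn_eq]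

theorem hermiteCoeff_eq_gaussianInner (f : MvPolynomial (Fin n) ℝ) (α : Fin n →₀ ℕ) :
    hermiteCoeff f α = gaussianInner n f (mvHermite α) := by
  simp only [hermiteCoeff, hermiteCoeffF, gaussianInner_eq_integral, eval_mvHermite]

end GaussianInner

section HermiteBasis

open scoped Pointwise in
theorem span_prod_aeval_X {σ ι R : Type*} [Fintype σ] [CommSemiring R] {f : ι → Polynomial R}
    (hf : Submodule.span R (Set.range f) = ⊤) :
    Submodule.span R (Set.range fun a : σ → ι => ∏ i, Polynomial.aeval (X i) (f (a i))) =
      (⊤ : Submodule R (MvPolynomial σ R)) := by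
  have range_prod_eq : (Set.range fun a : σ → ι => ∏ i, Polynomial.aeval (X i) (f (a i))) =
      ∏ i, Set.range fun k => Polynomial.aeval (X i : MvPolynomial σ R) (f k) := by
    rw [← Set.image_fintype_prod_pi, ← Set.range_piMap, ← Set.range_comp]
    rfl
  have X_pow_mem (i : σ) (k : ℕ) : (X i : MvPolynomial σ R) ^ k ∈
      Submodule.span R (Set.range fun k => Polynomial.aeval (X i : MvPolynomial σ R) (f k)) := by
    have mem_map := Submodule.mem_map_of_mem
      (f := (Polynomial.aeval (X i : MvPolynomial σ R)).toLinearMap)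
      (hf.ge (Submodule.mem_top (x := Polynomial.X ^ k)))
    rw [Submodule.map_span, ← Set.range_comp] at mem_map
    simpa [Function.comp_def] using mem_map
  rw [eq_top_iff, range_prod_eq, ← Submodule.prod_span, ← (basisMonomials σ R).span_eq,
    Submodule.span_le]
  rintro _ ⟨s, rfl⟩
  simp only [coe_basisMonomials, monomial_eq, map_one, one_mul, SetLike.mem_coe]
  rw [Finsupp.prod_fintype _ _ fun _ => pow_zero _]
  rw [← Submodule.span_singleton_le_iff_mem, ← Submodule.prod_span_singleton]
  exact prod_le_prod' fun i _ => (Submodule.span_singleton_le_iff_mem _ _).2 (X_pow_mem i _)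

theorem span_hermite (R : Type*) [CommRing R] [Nontrivial R] : Submodule.span R
    (Set.range fun k => (hermite k).map (algebraMap ℤ R)) = ⊤ := by
  let S : Polynomial.Sequence R :=
    ⟨fun k => (hermite k).map (algebraMap ℤ R), fun k => by
      rw [(Polynomial.hermite_monic k).degree_map, Polynomial.degree_hermite]⟩
  exact S.span fun k => by
    simpa [S] using ((Polynomial.hermite_monic k).map (algebraMap ℤ R)).leadingCoeff ▸ isUnit_one

theorem span_mvHermite (σ : Type*) [Fintype σ] :
    Submodule.span ℝ (Set.range (mvHermite (σ := σ))) = ⊤ := by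
  rw [eq_top_iff, ← span_prod_aeval_X (span_hermite ℝ), Submodule.span_le]
  rintro _ ⟨a, rfl⟩
  have prod_eq_smul : ∏ i, Polynomial.aeval (X i : MvPolynomial σ ℝ)
      ((hermite (a i)).map (algebraMap ℤ ℝ)) =
      √(multiFactorial (Finsupp.equivFunOnFinite.symm a)) •
        mvHermite (Finsupp.equivFunOnFinite.symm a) := by
    rw [mvHermite, smul_inv_smul₀ (Real.sqrt_pos.2 (Nat.cast_pos.2 (multiFactorial_pos _))).ne']
    exact prod_congr rfl fun i _ => Polynomial.aeval_map_algebraMap _ _ _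
  beta_reduce
  rw [SetLike.mem_coe, prod_eq_smul]
  exact Submodule.smul_mem _ _ (Submodule.subset_span ⟨_, rfl⟩)

variable {n : ℕ}

theorem linearIndependent_mvHermite : LinearIndependent ℝ (mvHermite (σ := Fin n)) :=
  LinearMap.linearIndependent_of_isOrthoᵢ (B := gaussianInner n)
    (fun α β h => (gaussianInner_mvHermite α β).trans (if_neg h))
    (fun α => by simp [gaussianInner_mvHermite])

/-- The basis `(h_α)` of `ℝ[x_1, …, x_n]`; the coordinates `hermiteBasis.repr f α` are the Hermite
coefficients `f̂(α)`. -/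
noncomputable def hermiteBasis : Module.Basis (Fin n →₀ ℕ) ℝ (MvPolynomial (Fin n) ℝ) :=
  Module.Basis.mk linearIndependent_mvHermite (span_mvHermite _).ge

theorem hermiteBasis_apply (α : Fin n →₀ ℕ) : hermiteBasis α = mvHermite α :=
  Module.Basis.mk_apply _ _ _

theorem hermiteBasis_repr_apply (f : MvPolynomial (Fin n) ℝ) (α : Fin n →₀ ℕ) :
    hermiteBasis.repr f α = hermiteCoeff f α := by
  suffices hermiteBasis.coord α = LinearMap.flip (gaussianInner n) (mvHermite α) by
    rw [hermiteCoeff_eq_gaussianInner, ← Module.Basis.coord_apply, this, LinearMap.flip_apply]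
  refine hermiteBasis.ext fun β => ?_
  rw [Module.Basis.coord_apply, Module.Basis.repr_self, Finsupp.single_apply, LinearMap.flip_apply,
    hermiteBasis_apply, gaussianInner_mvHermite]

theorem gaussianExp_mvHermite (α : Fin n →₀ ℕ) :
    gaussianExp n (mvHermite α) = if α = 0 then 1 else 0 := by
  rw [← gaussianInner_mvHermite, gaussianInner_apply]
  simp [mvHermite, multiFactorial]

theorem gaussianExp_normalizedDeriv (γ : Fin n →₀ ℕ) (f : MvPolynomial (Fin n) ℝ) :
    gaussianExp n (normalizedDeriv γ f) = hermiteBasis.repr f γ := by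
  suffices gaussianExp n ∘ₗ normalizedDeriv γ = hermiteBasis.coord γ from
    LinearMap.congr_fun this f
  refine hermiteBasis.ext fun α => ?_
  rw [Module.Basis.coord_apply, Module.Basis.repr_self, LinearMap.comp_apply,
    hermiteBasis_apply, normalizedDeriv_mvHermite, map_smul, gaussianExp_mvHermite,
    Finsupp.single_apply]
  by_cases h : γ ≤ α
  · have sub_eq_zero_iff : α - γ = 0 ↔ α = γ := by
      rw [tsub_eq_zero_iff_le, le_antisymm_iff, and_iff_left h]
    simp only [sub_eq_zero_iff]
    split_ifs with hαγ
    · simp [hαγ, multiChoose]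
    · simp
  · have ne : α ≠ γ := fun hαγ => h hαγ.ge
    simp [multiChoose_eq_zero_of_not_le h, ne]

theorem normalizedDeriv_eq_zero {s : Fin n →₀ ℕ} {f : MvPolynomial (Fin n) ℝ}
    (h : ∀ α, s ≤ α → hermiteBasis.repr f α = 0) : normalizedDeriv s f = 0 := by
  rw [← hermiteBasis.linearCombination_repr f, Finsupp.linearCombination_apply, Finsupp.sum,
    map_sum]
  refine sum_eq_zero fun α _ => ?_
  rw [map_smul, hermiteBasis_apply, normalizedDeriv_mvHermite]
  by_cases hα : s ≤ α
  · rw [h α hα, zero_smul]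
  · simp [multiChoose_eq_zero_of_not_le hα]

end HermiteBasis

section Parseval

theorem apply_map_self_of_orthogonal {ι R V W : Type*} [CommSemiring R] [AddCommMonoid V]
    [Module R V] [AddCommMonoid W] [Module R W] [DecidableEq ι] (B : LinearMap.BilinForm R W)
    (b : Module.Basis ι R V) (T : V →ₗ[R] W) {w : ι → R}
    (hT : ∀ i j, B (T (b i)) (T (b j)) = if i = j then w i else 0) (v : V) :
    B (T v) (T v) = (b.repr v).sum fun i c => w i * c ^ 2 := by
  have expand := LinearMap.sum_repr_mul_repr_mul b b v v (B := B.compl₁₂ T T)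
  simp only [LinearMap.compl₁₂_apply, hT, smul_eq_mul, mul_ite, mul_zero, Finsupp.sum_ite_eq]
    at expand
  rw [← expand]
  refine sum_congr rfl fun i hi => ?_
  beta_reduce
  rw [if_pos hi, sq, mul_left_comm, mul_comm (w i), mul_assoc]

variable {n : ℕ}

theorem norm2sq_eq_sum_sq (f : MvPolynomial (Fin n) ℝ) :
    norm2sq f = (hermiteBasis.repr f).sum fun _ c => c ^ 2 := by
  simpa [gaussianInner_self] using apply_map_self_of_orthogonal (gaussianInner n) hermiteBasis
    LinearMap.id (w := 1) (fun α β => by simp [hermiteBasis_apply, gaussianInner_mvHermite]) f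

theorem norm2sq_normalizedDeriv (s : Fin n →₀ ℕ) (f : MvPolynomial (Fin n) ℝ) :
    norm2sq (normalizedDeriv s f) =
      (hermiteBasis.repr f).sum fun α c => multiChoose α s * c ^ 2 := by
  rw [← gaussianInner_self]
  refine apply_map_self_of_orthogonal _ _ _ (fun α β => ?_) f
  simp only [hermiteBasis_apply, normalizedDeriv_mvHermite, map_smul, LinearMap.smul_apply,
    gaussianInner_mvHermite, smul_eq_mul]
  rcases eq_or_ne α β with rfl | hne
  · simp
  · rw [if_neg hne]
    by_cases hα : s ≤ α
    · by_cases hβ : s ≤ β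
      · simp [tsub_left_inj hα hβ, hne]
      · simp [multiChoose_eq_zero_of_not_le hβ]
    · simp [multiChoose_eq_zero_of_not_le hα]

end Parseval

section Multiplier

variable {ι R M : Type*} [CommSemiring R] [AddCommMonoid M] [Module R M] (b : Module.Basis ι R M)

/-- The endomorphism `b i ↦ m i • b i`, diagonal in the basis `b`. Packaging `m ↦ diagonalEnd b m`
as an algebra homomorphism makes sums and products of multipliers available through `map_add` and
`map_mul`. -/
noncomputable def diagonalEnd : (ι → R) →ₐ[R] Module.End R M where
  toFun m := b.constr R fun i => m i • b i
  map_one' := b.ext fun i => by simp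
  map_mul' m m' := b.ext fun i => by simp [smul_smul, mul_comm]
  map_zero' := b.ext fun i => by simp
  map_add' m m' := b.ext fun i => by simp [add_smul]
  commutes' c := b.ext fun i => by simp [Module.algebraMap_end_apply]

theorem diagonalEnd_apply_basis (m : ι → R) (i : ι) : diagonalEnd b m (b i) = m i • b i :=
  b.constr_basis R _ i

theorem repr_diagonalEnd (m : ι → R) (v : M) (i : ι) :
    b.repr (diagonalEnd b m v) i = m i * b.repr v i := by
  suffices b.coord i ∘ₗ diagonalEnd b m = m i • b.coord i from LinearMap.congr_fun this v
  refine b.ext fun j => ?_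
  by_cases h : j = i <;> simp [diagonalEnd_apply_basis, h]

variable {n : ℕ}

theorem norm2sq_diagonalEnd (m : (Fin n →₀ ℕ) → ℝ) (f : MvPolynomial (Fin n) ℝ) :
    norm2sq (diagonalEnd hermiteBasis m f) =
      (hermiteBasis.repr f).sum fun α c => m α ^ 2 * c ^ 2 := by
  rw [← gaussianInner_self]
  refine apply_map_self_of_orthogonal _ _ _ (fun α β => ?_) f
  rw [diagonalEnd_apply_basis, diagonalEnd_apply_basis]
  simp +contextual [hermiteBasis_apply, gaussianInner_mvHermite, sq]

theorem norm2sq_diagonalEnd_le {m m' : (Fin n →₀ ℕ) → ℝ} {c : ℝ}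
    (h : ∀ α, |m α| ≤ c * |m' α|) (f : MvPolynomial (Fin n) ℝ) :
    norm2sq (diagonalEnd hermiteBasis m f) ≤
      c ^ 2 * norm2sq (diagonalEnd hermiteBasis m' f) := by
  rw [norm2sq_diagonalEnd, norm2sq_diagonalEnd, Finsupp.sum, Finsupp.sum, mul_sum]
  refine sum_le_sum fun α _ => ?_
  have sq_le := pow_le_pow_left₀ (abs_nonneg _) (h α) 2
  rw [mul_pow, sq_abs, sq_abs] at sq_le
  simpa only [mul_assoc] using mul_le_mul_of_nonneg_right sq_le (sq_nonneg (hermiteBasis.repr f α))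

/-- The noise operator `U_ρ` on polynomials. -/
noncomputable def noiseOp (ρ : ℝ) : Module.End ℝ (MvPolynomial (Fin n) ℝ) :=
  diagonalEnd hermiteBasis fun α => ρ ^ α.degree

theorem norm2sq_noiseOp (ρ : ℝ) (f : MvPolynomial (Fin n) ℝ) :
    norm2sq (noiseOp ρ f) =
      (hermiteBasis.repr f).sum fun α c => (ρ ^ 2) ^ α.degree * c ^ 2 := by
  simp only [noiseOp, norm2sq_diagonalEnd, ← pow_mul, mul_comm]

end Multiplier

section ProductBound

theorem hasSum_multiChoose_mul_pow {σ : Type*} [Fintype σ] (x : ℝ) (α : σ →₀ ℕ) :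
    HasSum (fun s => (multiChoose α s : ℝ) * x ^ s.degree) ((1 + x) ^ α.degree) := by
  classical
  rw [add_comm, ← sum_antidiagonal_multiChoose_mul_pow]
  have fst_injOn : Set.InjOn Prod.fst (antidiagonal α : Set ((σ →₀ ℕ) × (σ →₀ ℕ))) := by
    intro p hp q hq h
    rw [mem_coe, HasAntidiagonal.mem_antidiagonal] at hp hq
    exact Prod.ext h (add_left_cancel (a := p.1) (by rw [hp, h, hq]))
  simp only [one_pow, mul_one]
  rw [← sum_image (f := fun s => (multiChoose α s : ℝ) * x ^ s.degree) fst_injOn]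
  refine hasSum_sum_of_ne_finset_zero fun s hs => ?_
  rw [multiChoose_eq_zero_of_not_le, Nat.cast_zero, zero_mul]
  intro h
  exact hs (mem_image.2 ⟨(s, α - s), mem_antidiagonal.2 (add_tsub_cancel_of_le h), rfl⟩)

variable {n : ℕ}

theorem pow_mul_norm2sq_nonneg {x : ℝ} (hx : 0 ≤ x) (f : MvPolynomial (Fin n) ℝ) :
    0 ≤ fun s => x ^ s.degree * norm2sq (normalizedDeriv s f) :=
  fun _ => mul_nonneg (pow_nonneg hx _) (norm2sq_nonneg _)

theorem hasSum_pow_mul_norm2sq_normalizedDeriv {x : ℝ} (hx : 0 ≤ x)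
    (f : MvPolynomial (Fin n) ℝ) :
    HasSum (fun s => x ^ s.degree * norm2sq (normalizedDeriv s f))
      (norm2sq (noiseOp (√(1 + x)) f)) := by
  rw [norm2sq_noiseOp, Real.sq_sqrt (by positivity)]
  refine (hasSum_sum fun α _ =>
    (hasSum_multiChoose_mul_pow x α).mul_right (hermiteBasis.repr f α ^ 2)).congr_fun fun s => ?_
  rw [norm2sq_normalizedDeriv, Finsupp.sum, mul_sum]
  exact sum_congr rfl fun α _ => by ring

theorem repr_mul_eq_sum_antidiagonal (f g : MvPolynomial (Fin n) ℝ) (γ : Fin n →₀ ℕ) :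
    hermiteBasis.repr (f * g) γ = ∑ p ∈ antidiagonal γ,
      √(multiChoose γ p.1) * gaussianInner n (normalizedDeriv p.1 f) (normalizedDeriv p.2 g) := by
  simp only [← gaussianExp_normalizedDeriv, normalizedDeriv_mul, map_sum, map_smul, smul_eq_mul,
    gaussianInner_apply]

theorem sq_repr_mul_le {x y : ℝ} (hxy : x.HolderConjugate y) (f g : MvPolynomial (Fin n) ℝ)
    (γ : Fin n →₀ ℕ) :
    hermiteBasis.repr (f * g) γ ^ 2 ≤ ∑ p ∈ antidiagonal γ,
      x ^ p.1.degree * norm2sq (normalizedDeriv p.1 f) *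
        (y ^ p.2.degree * norm2sq (normalizedDeriv p.2 g)) := by
  have hx := hxy.pos
  have hy := hxy.symm.pos
  have sum_weights : ∑ p ∈ antidiagonal γ,
      (multiChoose γ p.1 : ℝ) * (x⁻¹ ^ p.1.degree * y⁻¹ ^ p.2.degree) = 1 := by
    rw [sum_antidiagonal_multiChoose_mul_pow, hxy.inv_add_inv_eq_one, one_pow]
  rw [repr_mul_eq_sum_antidiagonal]
  refine (sum_sq_le_sum_mul_sum_of_sq_le_mul _ (fun p _ => ?_) (fun p _ => ?_)
    fun p _ => ?_).trans_eq ((congrArg (· * _) sum_weights).trans (one_mul _))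
  · positivity
  · exact mul_nonneg (pow_mul_norm2sq_nonneg hx.le _ _) (pow_mul_norm2sq_nonneg hy.le _ _)
  calc (√(multiChoose γ p.1) *
        gaussianInner n (normalizedDeriv p.1 f) (normalizedDeriv p.2 g)) ^ 2
      ≤ multiChoose γ p.1 *
          (norm2sq (normalizedDeriv p.1 f) * norm2sq (normalizedDeriv p.2 g)) := by
        rw [mul_pow, Real.sq_sqrt (Nat.cast_nonneg _)]
        exact mul_le_mul_of_nonneg_left (gaussianInner_sq_le _ _) (Nat.cast_nonneg _)
    _ = _ := by simp only [inv_pow]; field_simp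

theorem sum_sum_antidiagonal_mul_le {M : Type*} [AddCommMonoid M] [HasAntidiagonal M] {A B : M → ℝ}
    {a b : ℝ} (hA : 0 ≤ A) (hB : 0 ≤ B) (hAa : HasSum A a) (hBb : HasSum B b) (t : Finset M) :
    ∑ m ∈ t, ∑ p ∈ antidiagonal m, A p.1 * B p.2 ≤ a * b := by
  have summable_mul := hAa.summable.mul_of_nonneg hBb.summable hA hB
  rw [← hAa.tsum_eq, ← hBb.tsum_eq,
    hAa.summable.tsum_mul_tsum_eq_tsum_sum_antidiagonal hBb.summable summable_mul]
  exact (summable_sum_mul_antidiagonal_of_summable_mul summable_mul).sum_le_tsum _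
    fun m _ => sum_nonneg fun p _ => mul_nonneg (hA _) (hB _)

theorem norm2sq_mul_le {x y : ℝ} (hxy : x.HolderConjugate y) (f g : MvPolynomial (Fin n) ℝ) :
    norm2sq (f * g) ≤
      norm2sq (noiseOp (√(1 + x)) f) * norm2sq (noiseOp (√(1 + y)) g) := by
  rw [norm2sq_eq_sum_sq]
  exact (sum_le_sum fun γ _ => sq_repr_mul_le hxy f g γ).trans <| sum_sum_antidiagonal_mul_le
    (pow_mul_norm2sq_nonneg hxy.nonneg f) (pow_mul_norm2sq_nonneg hxy.symm.nonneg g)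
    (hasSum_pow_mul_norm2sq_normalizedDeriv hxy.nonneg f)
    (hasSum_pow_mul_norm2sq_normalizedDeriv hxy.symm.nonneg g) _

end ProductBound

section HighDegree

variable {n : ℕ}

theorem repr_mul_eq_zero {f g : MvPolynomial (Fin n) ℝ} {a b : ℕ} {γ : Fin n →₀ ℕ}
    (hf : ∀ α, a ≤ α.degree → hermiteBasis.repr f α = 0)
    (hg : ∀ α, b ≤ α.degree → hermiteBasis.repr g α = 0) (hγ : a + b ≤ γ.degree + 1) :
    hermiteBasis.repr (f * g) γ = 0 := by
  rw [repr_mul_eq_sum_antidiagonal]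
  refine sum_eq_zero fun p hp => ?_
  have degree_add : p.1.degree + p.2.degree = γ.degree := by
    rw [← map_add, mem_antidiagonal.1 hp]
  rcases le_or_gt a p.1.degree with ha | ha
  · rw [normalizedDeriv_eq_zero fun α hα => hf α (ha.trans (Finsupp.degree_mono hα)), map_zero,
      LinearMap.zero_apply, mul_zero]
  · have hb : b ≤ p.2.degree := by omega
    rw [normalizedDeriv_eq_zero fun α hα => hg α (hb.trans (Finsupp.degree_mono hα)), map_zero,
      mul_zero]

theorem tsum_eq_finsuppSum {σ R M : Type*} [Finite σ] [Zero R] [AddCommMonoid M]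
    [TopologicalSpace M] (u : (σ →₀ ℕ) →₀ R) {F : (σ → ℕ) → M} {F' : (σ →₀ ℕ) → R → M}
    (hF : ∀ α : σ →₀ ℕ, F ⇑α = F' α (u α)) (hF' : ∀ α, F' α 0 = 0) :
    ∑' α, F α = u.sum F' := by
  rw [← Finsupp.equivFunOnFinite.tsum_eq, tsum_eq_sum (s := u.support)]
  · exact sum_congr rfl fun α _ => hF α
  · intro α hα
    exact (hF α).trans <| by rw [Finsupp.notMem_support_iff.1 hα, hF']

theorem eval_diagonalEnd_hermiteBasis (m : (Fin n →₀ ℕ) → ℝ) (f : MvPolynomial (Fin n) ℝ)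
    (x : Fin n → ℝ) : eval x (diagonalEnd hermiteBasis m f) =
      (hermiteBasis.repr f).sum fun α c => m α * c * hermiteMv α x := by
  conv_lhs => rw [← hermiteBasis.linearCombination_repr f, Finsupp.linearCombination_apply,
    Finsupp.sum, map_sum, map_sum]
  refine sum_congr rfl fun α _ => ?_
  rw [map_smul, diagonalEnd_apply_basis, hermiteBasis_apply, smul_eval, smul_eval, eval_mvHermite]
  ring

theorem noiseOpF_eval (ρ : ℝ) (f : MvPolynomial (Fin n) ℝ) :
    noiseOpF ρ (fun x => eval x f) = fun x => eval x (noiseOp ρ f) := by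
  funext x
  rw [noiseOp, eval_diagonalEnd_hermiteBasis]
  refine tsum_eq_finsuppSum _ (fun α => ?_) fun α => by simp
  rw [hermiteBasis_repr_apply, hermiteCoeff, Finsupp.degree_eq_sum]

/-- The projection `f ↦ f^{≥ d}` onto the span of the `h_α` with `|α| ≥ d`. -/
noncomputable def highPart (d : ℕ) : Module.End ℝ (MvPolynomial (Fin n) ℝ) :=
  diagonalEnd hermiteBasis fun α => if d ≤ α.degree then 1 else 0

theorem repr_highPart {d : ℕ} {α : Fin n →₀ ℕ} (h : d ≤ α.degree) (f : MvPolynomial (Fin n) ℝ) :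
    hermiteBasis.repr (highPart d f) α = hermiteBasis.repr f α := by
  rw [highPart, repr_diagonalEnd, if_pos h, one_mul]

theorem highPartHalf_eq_eval (k : ℕ) (f : MvPolynomial (Fin n) ℝ) :
    highPartHalf k f = fun x => eval x (highPart ((k + 1) / 2) f) := by
  have half_le (d : ℕ) : (k + 1) / 2 ≤ d ↔ k ≤ 2 * d := by omega
  funext x
  rw [highPart, eval_diagonalEnd_hermiteBasis]
  refine tsum_eq_finsuppSum _ (fun α => ?_) fun α => by simp
  simp only [hermiteBasis_repr_apply, Finsupp.degree_eq_sum, half_le, ite_mul, one_mul, zero_mul]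

theorem weightGE_eq_sum (k : ℕ) (f : MvPolynomial (Fin n) ℝ) :
    weightGE k f = (hermiteBasis.repr f).sum fun α c => if k ≤ α.degree then c ^ 2 else 0 :=
  tsum_eq_finsuppSum _ (fun α => by rw [hermiteBasis_repr_apply, Finsupp.degree_eq_sum])
    fun α => by simp

theorem weightGE_le_norm2sq (k : ℕ) (f : MvPolynomial (Fin n) ℝ) : weightGE k f ≤ norm2sq f := by
  rw [weightGE_eq_sum, norm2sq_eq_sum_sq]
  refine sum_le_sum fun α _ => ?_
  beta_reduce
  split_ifs
  exacts [le_rfl, sq_nonneg _]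

theorem weightGE_congr {k : ℕ} {f g : MvPolynomial (Fin n) ℝ}
    (h : ∀ α : Fin n →₀ ℕ, k ≤ α.degree → hermiteBasis.repr f α = hermiteBasis.repr g α) :
    weightGE k f = weightGE k g := by
  refine tsum_congr fun α => if_ctx_congr Iff.rfl (fun hα => ?_) fun _ => rfl
  have coeff_eq := h (Finsupp.equivFunOnFinite.symm α) (by simpa [Finsupp.degree_eq_sum] using hα)
  rw [hermiteBasis_repr_apply, hermiteBasis_repr_apply, Finsupp.coe_equivFunOnFinite_symm]
    at coeff_eq
  rw [coeff_eq]

theorem weightGE_mul_self {k d : ℕ} (h : 2 * d ≤ k + 1) (f : MvPolynomial (Fin n) ℝ) :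
    weightGE k (f * f) = weightGE k (highPart d f * (2 • f - highPart d f)) := by
  refine weightGE_congr fun α hα => sub_eq_zero.1 ?_
  have sub_eq : f * f - highPart d f * (2 • f - highPart d f) =
      (f - highPart d f) * (f - highPart d f) := by ring
  have repr_low (β : Fin n →₀ ℕ) (hβ : d ≤ β.degree) :
      hermiteBasis.repr (f - highPart d f) β = 0 := by
    rw [map_sub, Finsupp.sub_apply, repr_highPart hβ, sub_self]
  rw [← Finsupp.sub_apply, ← map_sub, sub_eq]
  exact repr_mul_eq_zero repr_low repr_low (by omega)

theorem norm2sq_noiseOp_two_smul_sub_highPart_le (ρ : ℝ) (d : ℕ) (f : MvPolynomial (Fin n) ℝ) :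
    norm2sq (noiseOp ρ (2 • f - highPart d f)) ≤ 4 * norm2sq (noiseOp ρ f) := by
  have eq_diagonalEnd : noiseOp ρ (2 • f - highPart d f) =
      diagonalEnd hermiteBasis ((fun α => ρ ^ α.degree) *
        (2 - fun α => if d ≤ α.degree then 1 else 0)) f := by
    simp [noiseOp, highPart, map_ofNat]
  rw [eq_diagonalEnd]
  refine (norm2sq_diagonalEnd_le (c := 2) (m' := fun α => ρ ^ α.degree) (fun α => ?_) f).trans_eq
    (by norm_num [noiseOp])
  rw [Pi.mul_apply, abs_mul, mul_comm]
  refine mul_le_mul_of_nonneg_right ?_ (abs_nonneg _)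
  simp only [Pi.sub_apply, Pi.ofNat_apply]
  split_ifs <;> norm_num

end HighDegree

theorem weight_of_square_bound_general {n : ℕ} {x y : ℝ} (hxy : x.HolderConjugate y) (k : ℕ)
    (q : MvPolynomial (Fin n) ℝ) :
    weightGE k (q * q) ≤
      4 * l2sqF (noiseOpF (√(1 + x)) (highPartHalf k q)) *
        l2sqF (noiseOpF (√(1 + y)) (fun z => eval z q)) := by
  set high := highPart ((k + 1) / 2) q
  calc weightGE k (q * q)
      = weightGE k (high * (2 • q - high)) := weightGE_mul_self (by omega) q
    _ ≤ norm2sq (high * (2 • q - high)) := weightGE_le_norm2sq k _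
    _ ≤ norm2sq (noiseOp (√(1 + x)) high) * norm2sq (noiseOp (√(1 + y)) (2 • q - high)) :=
        norm2sq_mul_le hxy _ _
    _ ≤ norm2sq (noiseOp (√(1 + x)) high) * (4 * norm2sq (noiseOp (√(1 + y)) q)) :=
        mul_le_mul_of_nonneg_left (norm2sq_noiseOp_two_smul_sub_highPart_le _ _ q)
          (norm2sq_nonneg _)
    _ = 4 * norm2sq (noiseOp (√(1 + x)) high) * norm2sq (noiseOp (√(1 + y)) q) := by ring
    _ = 4 * l2sqF (noiseOpF (√(1 + x)) (highPartHalf k q)) *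
          l2sqF (noiseOpF (√(1 + y)) fun z => eval z q) := by
        rw [noiseOpF_eval, highPartHalf_eq_eval, noiseOpF_eval]
        rfl

/-- High-degree weight of a square: for any polynomial `q` and `k ≥ 1`,
`W^{≥k}[q²] ≤ 4·‖U_{√3}(q^{≥k/2})‖₂²·‖U_{√3} q‖₂²`. -/
theorem weight_of_square_bound (n : ℕ) (q : MvPolynomial (Fin n) ℝ) (k : ℕ) (hk : 1 ≤ k) :
    weightGE k (q * q) ≤
      4 * l2sqF (noiseOpF (Real.sqrt 3) (highPartHalf k q)) *
        l2sqF (noiseOpF (Real.sqrt 3) (fun x => eval x q)) := by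
  rw [show (3 : ℝ) = 1 + 2 by norm_num]
  exact weight_of_square_bound_general Real.HolderConjugate.two_two k q
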